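/- Let (φ,Φ) be a local morphism from the local Lie algebroid data (ρ,C) on ℝ^n with fiber ℝ^m to the local Lie algebroid data (ρ',C') on ℝ^{n'} with fiber ℝ^{m'}, let L' : ℝ^{n'} × ℝ^{m'} → ℝ be C², and define L : ℝ^n × ℝ^m → ℝ by L(x,y) := L'(φ(x), Φ(x)y). Let (x,y) : [t₀,t₁] → ℝ^n × ℝ^m be an admissible C¹ curve for (ρ,C), and set x' := φ ∘ x and y'(t) := Φ(x(t)) y(t). Then (x',y') is an admissible C¹ curve for (ρ',C'), and the Euler–Lagrange expressions are related by EL_α[L;(x,y)](t) = Σ_β Φ^β_α(x(t)) · EL'_β[L';(x',y')](t) for every α and every t ∈ [t₀,t₁]. -/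

import Mathlib

/-!
The Euler–Lagrange expression is `EL_α = d/dt (∂L/∂y^α) - dL(X_α)`, where
`X_α = ρ^i_α ∂/∂x^i - C^γ_{αβ} y^β ∂/∂y^γ` is the complete lift of the basis section `e_α`.
Let `B(x, y) = (φ x, Φ(x) y)`, and let `Φ̇ = DΦ(x)(ρ(x) y)` be the derivative of `Φ` along an
admissible curve. Together, the two conditions on a morphism say that `dB` maps `X_α` to
`Φ^β_α X'_β` plus the vertical vector `Φ̇^β_α ∂/∂y'^β`. Since
`∂(L' ∘ B)/∂y^α = Φ^β_α ∂L'/∂y'^β`, its time derivative contains the same term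
`Φ̇^β_α ∂L'/∂y'^β`, and the two occurrences cancel.
-/

open Set

/-- Partial derivative of a scalar function on `ℝ^n` in the `j`-th coordinate direction. -/
noncomputable def pderiv' {n : ℕ} (f : (Fin n → ℝ) → ℝ) (x : Fin n → ℝ) (j : Fin n) : ℝ :=
  deriv (fun s => f (Function.update x j s)) (x j)

/-- Local Lie algebroid data on `ℝ^n` with fiber `ℝ^m`: smooth anchor coefficients
`ρ^i_α` and smooth structure functions `C^α_{βγ}`, antisymmetric in the lower indices. -/
structure LocalAlgebroidData (n m : ℕ) where
  ρ : (Fin n → ℝ) → Fin n → Fin m → ℝ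
  C : (Fin n → ℝ) → Fin m → Fin m → Fin m → ℝ
  smooth_ρ : ContDiff ℝ (⊤ : ℕ∞) ρ
  smooth_C : ContDiff ℝ (⊤ : ℕ∞) C
  antisymm : ∀ x α β γ, C x α β γ = - C x α γ β

/-- Partial derivative `∂L/∂x^i` of a Lagrangian `L : ℝ^n × ℝ^m → ℝ`. -/
noncomputable def pLx {n m : ℕ} (L : (Fin n → ℝ) × (Fin m → ℝ) → ℝ)
    (x : Fin n → ℝ) (y : Fin m → ℝ) (i : Fin n) : ℝ :=
  pderiv' (fun z => L (z, y)) x i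

/-- Partial derivative `∂L/∂y^α` of a Lagrangian `L : ℝ^n × ℝ^m → ℝ`. -/
noncomputable def pLy {n m : ℕ} (L : (Fin n → ℝ) × (Fin m → ℝ) → ℝ)
    (x : Fin n → ℝ) (y : Fin m → ℝ) (α : Fin m) : ℝ :=
  pderiv' (fun w => L (x, w)) y α

/-- The Euler–Lagrange expression
`EL_α(t) = d/dt[∂L/∂y^α] + Σ_{β,γ} C^γ_{αβ} y^β ∂L/∂y^γ − Σ_i ρ^i_α ∂L/∂x^i`
of a curve `(x,y)`. -/
noncomputable def ELexpr {n m : ℕ} (A : LocalAlgebroidData n m)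
    (L : (Fin n → ℝ) × (Fin m → ℝ) → ℝ)
    (x : ℝ → Fin n → ℝ) (y : ℝ → Fin m → ℝ) (α : Fin m) (t : ℝ) : ℝ :=
  deriv (fun s => pLy L (x s) (y s) α) t
    + ∑ β, ∑ γ, A.C (x t) γ α β * y t β * pLy L (x t) (y t) γ
    - ∑ i, A.ρ (x t) i α * pLx L (x t) (y t) i

/-- The curve `(x,y)` is admissible on `[t₀,t₁]`: `(x^i)' = Σ_α ρ^i_α(x) y^α`. -/
def IsAdmissible {n m : ℕ} (A : LocalAlgebroidData n m) (t₀ t₁ : ℝ)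
    (x : ℝ → Fin n → ℝ) (y : ℝ → Fin m → ℝ) : Prop :=
  ∀ t ∈ Icc t₀ t₁, ∀ i, deriv (fun s => x s i) t = ∑ α, A.ρ (x t) i α * y t α

/-- `(x,y)` is a solution of Lagrange's equations for `L` on `[t₀,t₁]`. -/
def IsLagrangeSolution {n m : ℕ} (A : LocalAlgebroidData n m)
    (L : (Fin n → ℝ) × (Fin m → ℝ) → ℝ) (t₀ t₁ : ℝ)
    (x : ℝ → Fin n → ℝ) (y : ℝ → Fin m → ℝ) : Prop :=
  ∀ α, ∀ t ∈ Icc t₀ t₁,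
    deriv (fun s => pLy L (x s) (y s) α) t
        + ∑ β, ∑ γ, A.C (x t) γ α β * y t β * pLy L (x t) (y t) γ
      = ∑ i, A.ρ (x t) i α * pLx L (x t) (y t) i

/-- A local morphism of local Lie algebroid data: a pair of smooth maps `(φ, Φ)`
satisfying the admissibility and morphism conditions. -/
structure LocalMorphism {n m n' m' : ℕ}
    (A : LocalAlgebroidData n m) (A' : LocalAlgebroidData n' m') where
  φ : (Fin n → ℝ) → Fin n' → ℝ
  Φ : (Fin n → ℝ) → Fin m' → Fin m → ℝ
  smooth_φ : ContDiff ℝ (⊤ : ℕ∞) φ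
  smooth_Φ : ContDiff ℝ (⊤ : ℕ∞) Φ
  adm : ∀ x (k : Fin n') (α : Fin m),
    ∑ i, pderiv' (fun z => φ z k) x i * A.ρ x i α
      = ∑ β, A'.ρ (φ x) k β * Φ x β α
  morph : ∀ x (α : Fin m') (μ ν : Fin m),
    (∑ i, (A.ρ x i ν * pderiv' (fun z => Φ z α μ) x i
            - A.ρ x i μ * pderiv' (fun z => Φ z α ν) x i))
      + (∑ β, Φ x α β * A.C x β μ ν)
      - (∑ β, ∑ γ, A'.C (φ x) α β γ * Φ x β μ * Φ x γ ν) = 0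

open scoped Matrix

section CoordinateDerivatives

variable {n m : ℕ}

theorem pderiv'_eq_fderiv {f : (Fin n → ℝ) → ℝ} {x : Fin n → ℝ} (hf : DifferentiableAt ℝ f x)
    (i : Fin n) : pderiv' f x i = fderiv ℝ f x (Pi.single i 1) := by
  have hline : HasFDerivAt f (fderiv ℝ f x) (Function.update x i (x i)) := by
    simpa only [Function.update_eq_self] using hf.hasFDerivAt
  exact (hline.comp_hasDerivAt (x i) (hasDerivAt_update x i (x i))).deriv

theorem sum_pderiv'_mul {f : (Fin n → ℝ) → ℝ} {x : Fin n → ℝ} (hf : DifferentiableAt ℝ f x)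
    (v : Fin n → ℝ) : ∑ i, pderiv' f x i * v i = fderiv ℝ f x v := by
  conv_rhs => rw [pi_eq_sum_univ' v]
  simp only [map_sum, map_smul, smul_eq_mul, pderiv'_eq_fderiv hf, mul_comm]

theorem sum_pderiv'_apply_mul {ι : Type*} [Finite ι] {f : (Fin n → ℝ) → ι → ℝ} {x : Fin n → ℝ}
    (hf : DifferentiableAt ℝ f x) (v : Fin n → ℝ) (k : ι) :
    ∑ i, pderiv' (fun z => f z k) x i * v i = fderiv ℝ f x v k := by
  cases nonempty_fintype ι
  rw [sum_pderiv'_mul (differentiableAt_pi.1 hf k), fderiv_apply hf]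
  rfl

theorem sum_pderiv'_apply_apply_mul {ι κ : Type*} [Finite ι] [Finite κ]
    {f : (Fin n → ℝ) → ι → κ → ℝ} {x : Fin n → ℝ} (hf : DifferentiableAt ℝ f x)
    (v : Fin n → ℝ) (k : ι) (l : κ) :
    ∑ i, pderiv' (fun z => f z k l) x i * v i = fderiv ℝ f x v k l := by
  cases nonempty_fintype ι
  cases nonempty_fintype κ
  rw [sum_pderiv'_apply_mul (differentiableAt_pi.1 hf k), fderiv_apply hf]
  rfl

variable {L : (Fin n → ℝ) × (Fin m → ℝ) → ℝ} {x : Fin n → ℝ} {y : Fin m → ℝ}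

theorem sum_pLx_mul (hL : DifferentiableAt ℝ L (x, y)) (u : Fin n → ℝ) :
    ∑ i, pLx L x y i * u i = fderiv ℝ L (x, y) (u, 0) := by
  have hpartial : HasFDerivAt (fun z => L (z, y)) _ x :=
    hL.hasFDerivAt.comp x (hasFDerivAt_prodMk_left x y)
  exact (sum_pderiv'_mul hpartial.differentiableAt u).trans
    (DFunLike.congr_fun hpartial.fderiv u)

theorem sum_pLy_mul (hL : DifferentiableAt ℝ L (x, y)) (v : Fin m → ℝ) :
    ∑ α, pLy L x y α * v α = fderiv ℝ L (x, y) (0, v) := by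
  have hpartial : HasFDerivAt (fun w => L (x, w)) _ y :=
    hL.hasFDerivAt.comp y (hasFDerivAt_prodMk_right x y)
  exact (sum_pderiv'_mul hpartial.differentiableAt v).trans
    (DFunLike.congr_fun hpartial.fderiv v)

theorem pLy_eq_fderiv (hL : DifferentiableAt ℝ L (x, y)) (α : Fin m) :
    pLy L x y α = fderiv ℝ L (x, y) (0, Pi.single α 1) := by
  simp [← sum_pLy_mul hL, Pi.single_apply]

theorem differentiable_pLy (hL : ContDiff ℝ 2 L) (α : Fin m) :
    Differentiable ℝ (fun p : (Fin n → ℝ) × (Fin m → ℝ) => pLy L p.1 p.2 α) := by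
  have hL₁ : Differentiable ℝ L := hL.differentiable (by simp)
  have hfderiv : Differentiable ℝ (fderiv ℝ L) :=
    (hL.fderiv_right (m := 1) (by norm_num)).differentiable (by simp)
  simp only [pLy_eq_fderiv (hL₁ _)]
  exact hfderiv.clm_apply (differentiable_const _)

end CoordinateDerivatives

theorem of_mulVec_eq_sum {ι κ R : Type*} [Fintype κ] [CommSemiring R] (M : ι → κ → R)
    (y : κ → R) :
    Matrix.of M *ᵥ y = ∑ α, y α • fun i => M i α := by
  simp only [Matrix.mulVec_eq_sum, op_smul_eq_smul]
  rfl

namespace LocalAlgebroidData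

variable {n m : ℕ} (A : LocalAlgebroidData n m)

/-- The anchor `ρ(x) : ℝ^m → ℝ^n`, applied to a fiber vector. -/
def anchor (x : Fin n → ℝ) (y : Fin m → ℝ) : Fin n → ℝ :=
  Matrix.of (A.ρ x) *ᵥ y

/-- The bracket `[e_α, y]` at `x` of a basis section with a section having constant components
`y`; its `γ` component is `Σ_β C^γ_{αβ} y^β`. -/
def bracketBasis (x : Fin n → ℝ) (α : Fin m) (y : Fin m → ℝ) : Fin m → ℝ :=
  Matrix.of (fun γ β => A.C x γ α β) *ᵥ y

/-- The value at `(x, y)` of the complete lift `ρ^i_α ∂/∂x^i - C^γ_{αβ} y^β ∂/∂y^γ` of the basis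
section `e_α`, a vector field on the total space `ℝ^n × ℝ^m`. -/
def completeLift (x : Fin n → ℝ) (y : Fin m → ℝ) (α : Fin m) : (Fin n → ℝ) × (Fin m → ℝ) :=
  (fun i => A.ρ x i α, -A.bracketBasis x α y)

theorem anchor_eq_sum (x : Fin n → ℝ) (y : Fin m → ℝ) :
    A.anchor x y = ∑ α, y α • fun i => A.ρ x i α :=
  of_mulVec_eq_sum (A.ρ x) y

theorem ELexpr_eq_deriv_sub_fderiv_completeLift {L : (Fin n → ℝ) × (Fin m → ℝ) → ℝ}
    {x : ℝ → Fin n → ℝ} {y : ℝ → Fin m → ℝ} {t : ℝ} (hL : DifferentiableAt ℝ L (x t, y t))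
    (α : Fin m) :
    ELexpr A L x y α t = deriv (fun s => pLy L (x s) (y s) α) t
      - fderiv ℝ L (x t, y t) (A.completeLift (x t) (y t) α) := by
  have hvertical : ∑ β, ∑ γ, A.C (x t) γ α β * y t β * pLy L (x t) (y t) γ
      = fderiv ℝ L (x t, y t) (0, A.bracketBasis (x t) α (y t)) := by
    rw [← sum_pLy_mul hL, Finset.sum_comm]
    simp only [bracketBasis, Matrix.mulVec, dotProduct, Matrix.of_apply, Finset.mul_sum, mul_comm]
  have hhorizontal : ∑ i, A.ρ (x t) i α * pLx L (x t) (y t) i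
      = fderiv ℝ L (x t, y t) (fun i => A.ρ (x t) i α, 0) := by
    simp only [← sum_pLx_mul hL, mul_comm]
  have hsplit : A.completeLift (x t) (y t) α
      = (fun i => A.ρ (x t) i α, 0) - (0, A.bracketBasis (x t) α (y t)) := by
    simp [completeLift]
  rw [ELexpr, hvertical, hhorizontal, hsplit, map_sub]
  ring

end LocalAlgebroidData

theorem IsAdmissible.hasDerivAt {n m : ℕ} {A : LocalAlgebroidData n m} {t₀ t₁ t : ℝ}
    {x : ℝ → Fin n → ℝ} {y : ℝ → Fin m → ℝ} (hadm : IsAdmissible A t₀ t₁ x y)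
    (ht : t ∈ Icc t₀ t₁) (hx : DifferentiableAt ℝ x t) :
    HasDerivAt x (A.anchor (x t) (y t)) t := by
  have hanchor : deriv x t = A.anchor (x t) (y t) := by
    ext i
    rw [deriv_pi (differentiableAt_pi.1 hx)]
    exact hadm t ht i
  exact hanchor ▸ hx.hasDerivAt

/-- The map of total spaces `(x, y) ↦ (φ x, Φ(x) y)`, linear on fibers, determined by a base map
`φ` and fiber matrices `Φ`. -/
def bundleMap {n m n' m' : ℕ} (φ : (Fin n → ℝ) → Fin n' → ℝ)
    (Φ : (Fin n → ℝ) → Fin m' → Fin m → ℝ) (p : (Fin n → ℝ) × (Fin m → ℝ)) :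
    (Fin n' → ℝ) × (Fin m' → ℝ) :=
  (φ p.1, Matrix.of (Φ p.1) *ᵥ p.2)

section BundleMap

variable {n m n' m' : ℕ} {φ : (Fin n → ℝ) → Fin n' → ℝ}
  {Φ : (Fin n → ℝ) → Fin m' → Fin m → ℝ}

theorem contDiff_bundleMap {k : WithTop ℕ∞} (hφ : ContDiff ℝ k φ) (hΦ : ContDiff ℝ k Φ) :
    ContDiff ℝ k (bundleMap φ Φ) := by
  unfold bundleMap Matrix.mulVec dotProduct
  simp only [Matrix.of_apply]
  fun_prop

theorem fderiv_bundleMap_apply {x : Fin n → ℝ} (hφ : DifferentiableAt ℝ φ x)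
    (hΦ : DifferentiableAt ℝ Φ x) (y : Fin m → ℝ) (u : Fin n → ℝ) (v : Fin m → ℝ) :
    fderiv ℝ (bundleMap φ Φ) (x, y) (u, v)
      = (fderiv ℝ φ x u, Matrix.of (fderiv ℝ Φ x u) *ᵥ y + Matrix.of (Φ x) *ᵥ v) := by
  have hfst : HasFDerivAt Prod.fst (ContinuousLinearMap.fst ℝ _ _) (x, y) := hasFDerivAt_fst
  have hbase := HasFDerivAt.comp (x, y) hφ.hasFDerivAt hfst
  have hmatrix := HasFDerivAt.comp (x, y) hΦ.hasFDerivAt hfst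
  have hentry (β δ) := hasFDerivAt_pi'.1 (hasFDerivAt_pi'.1 hmatrix β) δ
  have hcoord (δ) := hasFDerivAt_pi'.1 (hasFDerivAt_snd (𝕜 := ℝ) (p := (x, y))) δ
  have hfiber := hasFDerivAt_pi.2 fun β =>
    HasFDerivAt.fun_sum (u := Finset.univ) fun δ _ => (hentry β δ).mul (hcoord δ)
  have hB : HasFDerivAt (bundleMap φ Φ) _ (x, y) := hbase.prodMk hfiber
  rw [hB.fderiv]
  ext β
  · simp
  · simp [Matrix.mulVec, dotProduct, Finset.sum_add_distrib, mul_comm, add_comm]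

variable {L' : (Fin n' → ℝ) × (Fin m' → ℝ) → ℝ}

theorem pLy_comp_bundleMap {x : Fin n → ℝ} {y : Fin m → ℝ}
    (hL' : DifferentiableAt ℝ L' (bundleMap φ Φ (x, y))) (α : Fin m) :
    pLy (L' ∘ bundleMap φ Φ) x y α
      = ∑ β, pLy L' (φ x) (Matrix.of (Φ x) *ᵥ y) β * Φ x β α := by
  have hfiber : HasFDerivAt (fun w => bundleMap φ Φ (x, w)) _ y :=
    (hasFDerivAt_const (φ x) y).prodMk
      (Matrix.of (Φ x)).mulVecLin.toContinuousLinearMap.hasFDerivAt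
  have hcomp : HasFDerivAt (fun w => (L' ∘ bundleMap φ Φ) (x, w)) _ y :=
    HasFDerivAt.comp y hL'.hasFDerivAt hfiber
  rw [pLy, pderiv'_eq_fderiv hcomp.differentiableAt, hcomp.fderiv]
  refine Eq.trans ?_ (sum_pLy_mul hL' fun β => Φ x β α).symm
  simp only [ContinuousLinearMap.comp_apply, ContinuousLinearMap.prod_apply, zero_apply,
    LinearMap.coe_toContinuousLinearMap', Matrix.mulVecBilin_apply, Matrix.mulVec_single_one]
  rfl

theorem deriv_pLy_comp_bundleMap (hL' : Differentiable ℝ L') {x : ℝ → Fin n → ℝ}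
    {y : ℝ → Fin m → ℝ} {v : Fin n → ℝ} {t : ℝ} (hΦ : DifferentiableAt ℝ Φ (x t))
    (hx : HasDerivAt x v t)
    (hp : ∀ β, DifferentiableAt ℝ (fun s => pLy L' (φ (x s)) (Matrix.of (Φ (x s)) *ᵥ y s) β) t)
    (α : Fin m) :
    deriv (fun s => pLy (L' ∘ bundleMap φ Φ) (x s) (y s) α) t
      = ∑ β, Φ (x t) β α * deriv (fun s => pLy L' (φ (x s)) (Matrix.of (Φ (x s)) *ᵥ y s) β) t
        + fderiv ℝ L' (φ (x t), Matrix.of (Φ (x t)) *ᵥ y t)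
            (0, fun β => fderiv ℝ Φ (x t) v β α) := by
  have hcurve := hΦ.hasFDerivAt.comp_hasDerivAt t hx
  have hentry (β) := hasDerivAt_pi.1 (hasDerivAt_pi.1 hcurve β) α
  have hsum := HasDerivAt.fun_sum (u := Finset.univ) fun β _ => (hp β).hasDerivAt.mul (hentry β)
  simp only [pLy_comp_bundleMap (hL' _), ← sum_pLy_mul (hL' _)]
  refine hsum.deriv.trans ?_
  simp only [Finset.sum_add_distrib, Function.comp_apply, mul_comm (Φ _ _ _)]

end BundleMap

namespace LocalMorphism

variable {n m n' m' : ℕ} {A : LocalAlgebroidData n m} {A' : LocalAlgebroidData n' m'}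
  (F : LocalMorphism A A')

theorem differentiable_φ : Differentiable ℝ F.φ :=
  F.smooth_φ.differentiable (by simp)

theorem differentiable_Φ : Differentiable ℝ F.Φ :=
  F.smooth_Φ.differentiable (by simp)

theorem fderiv_φ_ρ (x : Fin n → ℝ) (α : Fin m) :
    fderiv ℝ F.φ x (fun i => A.ρ x i α) = A'.anchor (F.φ x) (fun β => F.Φ x β α) := by
  ext k
  exact (sum_pderiv'_apply_mul (F.differentiable_φ x) _ k).symm.trans (F.adm x k α)

theorem fderiv_φ_anchor (x : Fin n → ℝ) (y : Fin m → ℝ) :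
    fderiv ℝ F.φ x (A.anchor x y) = A'.anchor (F.φ x) (Matrix.of (F.Φ x) *ᵥ y) := by
  simp only [LocalAlgebroidData.anchor, of_mulVec_eq_sum, map_sum, map_smul, fderiv_φ_ρ,
    Matrix.mulVec_sum, Matrix.mulVec_smul]

theorem fderiv_Φ_ρ (x : Fin n → ℝ) (β : Fin m') (α ν : Fin m) :
    fderiv ℝ F.Φ x (fun i => A.ρ x i ν) β α
      = fderiv ℝ F.Φ x (fun i => A.ρ x i α) β ν - ∑ γ, F.Φ x β γ * A.C x γ α ν
        + ∑ δ, ∑ ε, A'.C (F.φ x) β δ ε * F.Φ x δ α * F.Φ x ε ν := by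
  have hmorph := F.morph x β α ν
  simp only [Finset.sum_sub_distrib, mul_comm (A.ρ x _ _),
    sum_pderiv'_apply_apply_mul (F.differentiable_Φ x)] at hmorph
  linear_combination hmorph

theorem fderiv_Φ_anchor (x : Fin n → ℝ) (y : Fin m → ℝ) (α : Fin m) :
    (fun β => fderiv ℝ F.Φ x (A.anchor x y) β α)
      = Matrix.of (fderiv ℝ F.Φ x fun i => A.ρ x i α) *ᵥ y
        - Matrix.of (F.Φ x) *ᵥ A.bracketBasis x α y
        + ∑ δ, F.Φ x δ α • A'.bracketBasis (F.φ x) δ (Matrix.of (F.Φ x) *ᵥ y) := by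
  ext β
  have hsource : (Matrix.of (F.Φ x) *ᵥ A.bracketBasis x α y) β
      = ∑ ν, y ν * ∑ γ, F.Φ x β γ * A.C x γ α ν := by
    rw [LocalAlgebroidData.bracketBasis, Matrix.mulVec_mulVec]
    simp only [Matrix.mulVec, dotProduct, Matrix.mul_apply, Matrix.of_apply, mul_comm]
  have htarget : (∑ δ, F.Φ x δ α • A'.bracketBasis (F.φ x) δ (Matrix.of (F.Φ x) *ᵥ y)) β
      = ∑ ν, y ν * ∑ δ, ∑ ε, A'.C (F.φ x) β δ ε * F.Φ x δ α * F.Φ x ε ν := by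
    simp only [LocalAlgebroidData.bracketBasis, Matrix.mulVec_mulVec, Finset.sum_apply]
    simp only [Pi.smul_apply, smul_eq_mul, Matrix.mulVec, dotProduct, Matrix.mul_apply,
      Matrix.of_apply, Finset.mul_sum, Finset.sum_mul]
    rw [Finset.sum_comm]
    exact Finset.sum_congr rfl fun _ _ => Finset.sum_congr rfl fun _ _ =>
      Finset.sum_congr rfl fun _ _ => by ring
  calc fderiv ℝ F.Φ x (A.anchor x y) β α
      = ∑ ν, y ν * fderiv ℝ F.Φ x (fun i => A.ρ x i ν) β α := by
        simp [A.anchor_eq_sum]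
    _ = _ := by
        simp only [F.fderiv_Φ_ρ x β α, mul_add, mul_sub, Finset.sum_add_distrib,
          Finset.sum_sub_distrib, Pi.add_apply, Pi.sub_apply, hsource, htarget]
        simp only [Matrix.mulVec, dotProduct, Matrix.of_apply, mul_comm]

theorem fderiv_bundleMap_completeLift (x : Fin n → ℝ) (y : Fin m → ℝ) (α : Fin m) :
    fderiv ℝ (bundleMap F.φ F.Φ) (x, y) (A.completeLift x y α)
      = ∑ δ, F.Φ x δ α • A'.completeLift (F.φ x) (Matrix.of (F.Φ x) *ᵥ y) δ
        + (0, fun β => fderiv ℝ F.Φ x (A.anchor x y) β α) := by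
  rw [LocalAlgebroidData.completeLift,
    fderiv_bundleMap_apply (F.differentiable_φ x) (F.differentiable_Φ x), fderiv_Φ_anchor,
    fderiv_φ_ρ, A'.anchor_eq_sum]
  ext1
  · simp [LocalAlgebroidData.completeLift, Prod.fst_sum]
  · simp only [LocalAlgebroidData.completeLift, Matrix.mulVec_neg, Prod.smul_mk, smul_neg,
      Prod.snd_add, Prod.snd_sum, Finset.sum_neg_distrib]
    abel

variable {L' : (Fin n' → ℝ) × (Fin m' → ℝ) → ℝ} {t₀ t₁ t : ℝ}
  {x : ℝ → Fin n → ℝ} {y : ℝ → Fin m → ℝ}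

theorem isAdmissible_bundleMap (hx : Differentiable ℝ x) (hadm : IsAdmissible A t₀ t₁ x y) :
    IsAdmissible A' t₀ t₁ (fun s => F.φ (x s)) (fun s => Matrix.of (F.Φ (x s)) *ᵥ y s) := by
  intro t ht k
  have hcurve := (F.differentiable_φ (x t)).hasFDerivAt.comp_hasDerivAt t
    (hadm.hasDerivAt ht (hx t))
  rw [fderiv_φ_anchor] at hcurve
  exact (hasDerivAt_pi.1 hcurve k).deriv

theorem ELexpr_comp_bundleMap (hL' : ContDiff ℝ 2 L')
    (hx : HasDerivAt x (A.anchor (x t) (y t)) t) (hy : DifferentiableAt ℝ y t) (α : Fin m) :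
    ELexpr A (L' ∘ bundleMap F.φ F.Φ) x y α t
      = ∑ β, F.Φ (x t) β α * ELexpr A' L' (fun s => F.φ (x s))
          (fun s => Matrix.of (F.Φ (x s)) *ᵥ y s) β t := by
  have hL'₁ : Differentiable ℝ L' := hL'.differentiable (by simp)
  have hB : Differentiable ℝ (bundleMap F.φ F.Φ) :=
    (contDiff_bundleMap F.smooth_φ F.smooth_Φ).differentiable (by simp)
  have hmomentum (β : Fin m') : DifferentiableAt ℝ
      (fun s => pLy L' (F.φ (x s)) (Matrix.of (F.Φ (x s)) *ᵥ y s) β) t :=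
    (differentiable_pLy hL' β _).comp t ((hB _).comp t (hx.differentiableAt.prodMk hy))
  have himage (β : Fin m') := A'.ELexpr_eq_deriv_sub_fderiv_completeLift
    (x := fun s => F.φ (x s)) (y := fun s => Matrix.of (F.Φ (x s)) *ᵥ y s) (t := t) (hL'₁ _) β
  have hlift : fderiv ℝ (L' ∘ bundleMap F.φ F.Φ) (x t, y t) (A.completeLift (x t) (y t) α)
      = fderiv ℝ L' (F.φ (x t), Matrix.of (F.Φ (x t)) *ᵥ y t)
          (∑ δ, F.Φ (x t) δ α • A'.completeLift (F.φ (x t)) (Matrix.of (F.Φ (x t)) *ᵥ y t) δ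
            + (0, fun β => fderiv ℝ F.Φ (x t) (A.anchor (x t) (y t)) β α)) := by
    rw [fderiv_comp _ (hL'₁ _) (hB _), ContinuousLinearMap.comp_apply,
      F.fderiv_bundleMap_completeLift, bundleMap]
  rw [A.ELexpr_eq_deriv_sub_fderiv_completeLift ((hL'₁ _).comp _ (hB _)), hlift,
    deriv_pLy_comp_bundleMap hL'₁ (F.differentiable_Φ _) hx hmomentum, map_add,
    add_sub_add_right_eq_sub]
  simp only [himage, map_sum, map_smul, smul_eq_mul, mul_sub, Finset.sum_sub_distrib]

end LocalMorphism

/-- **Morphisms relate Euler–Lagrange expressions (coordinate form).**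
If `(φ,Φ)` is a local morphism, `L = L' ∘ (φ,Φ)` and `(x,y)` is admissible, then the
image curve `(φ∘x, Φ(x)y)` is an admissible C¹ curve and
`EL_α[L;(x,y)] = Σ_β Φ^β_α(x) EL'_β[L';(x',y')]`. -/
theorem morphism_relates_euler_lagrange
    {n m n' m' : ℕ} {A : LocalAlgebroidData n m} {A' : LocalAlgebroidData n' m'}
    (F : LocalMorphism A A')
    (L' : (Fin n' → ℝ) × (Fin m' → ℝ) → ℝ) (hL' : ContDiff ℝ 2 L')
    (t₀ t₁ : ℝ) (ht : t₀ < t₁)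
    (x : ℝ → Fin n → ℝ) (y : ℝ → Fin m → ℝ)
    (hx : ContDiff ℝ 1 x) (hy : ContDiff ℝ 1 y)
    (hadm : IsAdmissible A t₀ t₁ x y) :
    (ContDiff ℝ 1 (fun t => F.φ (x t))
      ∧ ContDiff ℝ 1 (fun t (β : Fin m') => ∑ α, F.Φ (x t) β α * y t α)
      ∧ IsAdmissible A' t₀ t₁ (fun t => F.φ (x t))
          (fun t β => ∑ α, F.Φ (x t) β α * y t α))
    ∧ (∀ α, ∀ t ∈ Icc t₀ t₁,
        ELexpr A (fun p => L' (F.φ p.1, fun β => ∑ δ, F.Φ p.1 β δ * p.2 δ)) x y α t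
          = ∑ β, F.Φ (x t) β α *
              ELexpr A' L' (fun s => F.φ (x s))
                (fun s β => ∑ δ, F.Φ (x s) β δ * y s δ) β t) := by
  have hcurve : ContDiff ℝ 1 (fun s => bundleMap F.φ F.Φ (x s, y s)) :=
    ((contDiff_bundleMap F.smooth_φ F.smooth_Φ).of_le (mod_cast le_top)).comp (hx.prodMk hy)
  have hx₁ : Differentiable ℝ x := hx.differentiable one_ne_zero
  have hy₁ : Differentiable ℝ y := hy.differentiable one_ne_zero
  refine ⟨⟨hcurve.fst, hcurve.snd, F.isAdmissible_bundleMap hx₁ hadm⟩, fun α t ht => ?_⟩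
  exact F.ELexpr_comp_bundleMap hL' (hadm.hasDerivAt ht (hx₁ t)) (hy₁ t) α
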